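/- Let F be a standard set-valued map and Φ the induced set-valued dynamical system. Let X : ℝ₊ → ℝ^m be a bounded asymptotic pseudotrajectory of Φ and let A be an attractor for Φ with basin of attraction B(A). If the limit set L(X) = ⋂_{t≥0} closure{X(s) : s ≥ t} intersects B(A), then L(X) ⊂ A. -/

import Mathlib

open MeasureTheory Filter Topology Metric Set Pointwise

noncomputable section

/-- `ℝ^m` with the Euclidean norm. -/
abbrev Euc (m : ℕ) := EuclideanSpace ℝ (Fin m)

/-- A standard set-valued map `F : ℝ^m ⇒ ℝ^m`: nonempty compact convex values,
closed graph, and linear growth. -/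
def IsStandardSVM {m : ℕ} (F : Euc m → Set (Euc m)) : Prop :=
  (∀ x, (F x).Nonempty ∧ IsCompact (F x) ∧ Convex ℝ (F x)) ∧
  IsClosed {p : Euc m × Euc m | p.2 ∈ F p.1} ∧
  ∃ c > 0, ∀ x, ∀ z ∈ F x, ‖z‖ ≤ c * (1 + ‖x‖)

/-- A solution of the differential inclusion `dx/dt ∈ F x`: an absolutely continuous
curve `z : ℝ → ℝ^m` (written as the integral of a locally integrable derivative `h`)
with `h t ∈ F (z t)` for almost every `t`. -/
def IsSolution {m : ℕ} (F : Euc m → Set (Euc m)) (z : ℝ → Euc m) : Prop :=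
  Continuous z ∧ ∃ h : ℝ → Euc m,
    (∀ a b : ℝ, IntervalIntegrable h volume a b) ∧
    (∀ᵐ t ∂volume, h t ∈ F (z t)) ∧
    ∀ t : ℝ, z t = z 0 + ∫ u in (0:ℝ)..t, h u

/-- `Φ_t(x)`: the set of points reached at time `t` by solutions starting at `x`. -/
def PhiT {m : ℕ} (F : Euc m → Set (Euc m)) (t : ℝ) (x : Euc m) : Set (Euc m) :=
  {y | ∃ z : ℝ → Euc m, IsSolution F z ∧ z 0 = x ∧ z t = y}

/-- `ω_Φ(x) = ⋂_{t ≥ 0} closure (Φ_{[t,∞)}(x))`. -/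
def omegaLimitSV {m : ℕ} (F : Euc m → Set (Euc m)) (x : Euc m) : Set (Euc m) :=
  ⋂ t ∈ Ici (0:ℝ), closure {y | ∃ s ≥ t, y ∈ PhiT F s x}

/-- An attractor for the set-valued dynamical system induced by `F`: a nonempty,
compact, invariant set admitting a neighborhood `U` with `Φ_t(U) ⊆ N^ε(A)` for all
`t` large enough. -/
def IsAttractorSV {m : ℕ} (F : Euc m → Set (Euc m)) (A : Set (Euc m)) : Prop :=
  A.Nonempty ∧ IsCompact A ∧
  (∀ x ∈ A, ∃ z : ℝ → Euc m, IsSolution F z ∧ z 0 = x ∧ Set.range z ⊆ A) ∧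
  ∃ U : Set (Euc m), IsOpen U ∧ A ⊆ U ∧
    ∀ ε > 0, ∃ tε > 0, ∀ t ≥ tε, ∀ x ∈ U, PhiT F t x ⊆ Metric.thickening ε A

/-- The basin of attraction `B(A) = {x | ω_Φ(x) ⊆ A}`. -/
def basinSV {m : ℕ} (F : Euc m → Set (Euc m)) (A : Set (Euc m)) : Set (Euc m) :=
  {x | omegaLimitSV F x ⊆ A}

/-- The limit set `L(X) = ⋂_{t ≥ 0} closure {X s : s ≥ t}` of a path. -/
def limitSet {m : ℕ} (X : ℝ → Euc m) : Set (Euc m) :=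
  ⋂ t ∈ Ici (0:ℝ), closure {y | ∃ s ≥ t, X s = y}

/-- `inf_{z ∈ S_Φ} sup_{u ∈ [0,T]} ‖z u - Y u‖`. -/
def distToSol {m : ℕ} (F : Euc m → Set (Euc m)) (Y : ℝ → Euc m) (T : ℝ) : ℝ :=
  sInf {d | ∃ z : ℝ → Euc m, IsSolution F z ∧ d = ⨆ u : Icc (0:ℝ) T, ‖z u - Y u‖}

/-- Asymptotic pseudotrajectory of the set-valued dynamical system induced by `F`. -/
def IsAPT {m : ℕ} (F : Euc m → Set (Euc m)) (X : ℝ → Euc m) : Prop :=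
  ∀ T > 0, Tendsto (fun t => distToSol F (fun u => X (t + u)) T) atTop (𝓝 0)

/-- A point `p` is attainable by the process `X`: for every `t > 0` and every
neighborhood `U` of `p`, `P(∃ s ≥ t, X s ∈ U) > 0`. -/
def Attainable {m : ℕ} {Ω : Type*} [MeasurableSpace Ω] (μ : Measure Ω)
    (X : ℝ → Ω → Euc m) (p : Euc m) : Prop :=
  ∀ t > 0, ∀ U ∈ 𝓝 p, 0 < μ {ω | ∃ s ≥ t, X s ω ∈ U}

/-- `τ_n = γ_1 + ⋯ + γ_n`. -/
def tauOf (γ : ℕ → ℝ) (n : ℕ) : ℝ := ∑ i ∈ Finset.range n, γ (i + 1)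

/-- `m(t) = sup {j | τ_j ≤ t}`. -/
def mIdx (γ : ℕ → ℝ) (t : ℝ) : ℕ := sSup {j | tauOf γ j ≤ t}

/-- Hypothesis H1: there is `w t α T` decreasing to `0` in `t` dominating the
conditional probability that `sup_{s ≥ t} inf_{z ∈ S_Φ} sup_{u ∈ [0,T]} ‖z u − X (s+u)‖ ≥ α`. -/
def HypH1 {m : ℕ} {Ω : Type*} [MeasurableSpace Ω] (μ : Measure Ω)
    (𝓕 : ℝ → MeasurableSpace Ω) (F : Euc m → Set (Euc m)) (X : ℝ → Ω → Euc m) : Prop :=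
  ∃ w : ℝ → ℝ → ℝ → ℝ,
    (∀ α > 0, ∀ T > 0, Antitone (fun t => w t α T) ∧ Tendsto (fun t => w t α T) atTop (𝓝 0)) ∧
    ∀ α > 0, ∀ T > 0, ∀ t : ℝ, ∀ᵐ ω ∂μ,
      (μ[Set.indicator {ω' | α ≤ ⨆ s : Ici t, distToSol F (fun u => X ((s : ℝ) + u) ω') T}
          (fun _ => (1:ℝ)) | 𝓕 t]) ω ≤ w t α T

/-- `F^δ(x) = {y | ∃ z ∈ B(x,δ), dist(y, F z) < δ}`, with the convention `F^0 = F`. -/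
def Fdelta {m : ℕ} (F : Euc m → Set (Euc m)) (δ : ℝ) (x : Euc m) : Set (Euc m) :=
  if δ = 0 then F x
  else {y | ∃ z : Euc m, dist z x < δ ∧ Metric.infDist y (F z) < δ}

/-- A `(δ(·), V(·))`-perturbed solution of `dx/dt ∈ F x`. -/
def IsPerturbedSolution {m : ℕ} (F : Euc m → Set (Euc m)) (δ : ℝ → ℝ) (V : ℝ → Euc m)
    (y : ℝ → Euc m) : Prop :=
  Continuous y ∧ (∀ t > 0, 0 < δ t) ∧ Antitone δ ∧ Tendsto δ atTop (𝓝 0) ∧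
  (∀ a b : ℝ, IntervalIntegrable V volume a b) ∧
  (∀ T > 0, Tendsto (fun t => ⨆ u : Icc (0:ℝ) T, ‖∫ r in t..(t + (u : ℝ)), V r‖)
    atTop (𝓝 0)) ∧
  ∃ h : ℝ → Euc m, (∀ a b : ℝ, IntervalIntegrable h volume a b) ∧
    (∀ᵐ t ∂(volume.restrict (Ioi (0:ℝ))), h t - V t ∈ Fdelta F (δ t) (y t)) ∧
    ∀ t ∈ Ici (0:ℝ), y t = y 0 + ∫ u in (0:ℝ)..t, h u

/-- `Δ(n,T) = sup_{n < k ≤ m(τ_n + T)} ‖∑_{i=n}^{k-1} γ_{i+1} U_{i+1}‖`. -/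
def DeltaNT {m : ℕ} {Ω : Type*} (γ : ℕ → ℝ) (U : ℕ → Ω → Euc m) (T : ℝ) (n : ℕ)
    (ω : Ω) : ℝ :=
  ⨆ k : {k : ℕ // n < k ∧ k ≤ mIdx γ (tauOf γ n + T)},
    ‖∑ i ∈ Finset.Ico n (k : ℕ), γ (i + 1) • U (i + 1) ω‖

/-- Condition (bruit2): the conditional probability that `sup_{m ≥ n} Δ(m,T) ≥ ε` is
dominated by some `w n ε T` decreasing to `0` in `n`. -/
def Bruit2 {m : ℕ} {Ω : Type*} [MeasurableSpace Ω] (μ : Measure Ω)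
    (𝓕 : ℕ → MeasurableSpace Ω) (γ : ℕ → ℝ) (U : ℕ → Ω → Euc m) : Prop :=
  ∃ w : ℕ → ℝ → ℝ → ℝ,
    (∀ ε > 0, ∀ T > 0, Antitone (fun n => w n ε T) ∧ Tendsto (fun n => w n ε T) atTop (𝓝 0)) ∧
    ∀ ε > 0, ∀ T > 0, ∀ n : ℕ, ∀ᵐ ω ∂μ,
      (μ[Set.indicator {ω' | ε ≤ ⨆ k : Ici n, DeltaNT γ U T (k : ℕ) ω'}
          (fun _ => (1:ℝ)) | 𝓕 n]) ω ≤ w n ε T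

/-- Topological `limsup` of a sequence of sets: points whose every neighborhood
meets infinitely many of the sets. -/
def setLimsup {X : Type*} [TopologicalSpace X] (A : ℕ → Set X) : Set X :=
  {y | ∀ U ∈ 𝓝 y, {n | (U ∩ A n).Nonempty}.Infinite}

/-- The operator `Λ^δ` on continuous paths `[0,T] → ℝ^m` (with `Λ^0 = Λ`). -/
def LambdaD {m : ℕ} (F : Euc m → Set (Euc m)) (T : ℝ) (hT : 0 ≤ T) (δ : ℝ)
    (z : C(Icc (0:ℝ) T, Euc m)) : Set C(Icc (0:ℝ) T, Euc m) :=
  {y | ∃ h : ℝ → Euc m, IntervalIntegrable h volume 0 T ∧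
    (∀ u : Icc (0:ℝ) T, h u ∈ Fdelta F δ (z u)) ∧
    ∀ τ : Icc (0:ℝ) T, y τ = z ⟨0, Set.left_mem_Icc.mpr hT⟩ + ∫ u in (0:ℝ)..(τ : ℝ), h u}

/-- `Φ^T(M) = closure (⋃_{s ∈ [0,T]} Φ_s(M))`. -/
def PhiTM {m : ℕ} (F : Euc m → Set (Euc m)) (T : ℝ) (M : Set (Euc m)) : Set (Euc m) :=
  closure (⋃ s ∈ Icc (0:ℝ) T, ⋃ x ∈ M, PhiT F s x)

/-- `‖F‖ = sup_{x ∈ Φ^T(M)} sup_{y ∈ F x} ‖y‖`. -/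
def normF {m : ℕ} (F : Euc m → Set (Euc m)) (T : ℝ) (M : Set (Euc m)) : ℝ :=
  sSup {r | ∃ x ∈ PhiTM F T M, ∃ y ∈ F x, r = ‖y‖}

/-- `K_C`: Lipschitz paths with constant `‖F‖ + C + 1` starting in `M`. -/
def KC {m : ℕ} (F : Euc m → Set (Euc m)) (T : ℝ) (hT : 0 ≤ T) (M : Set (Euc m))
    (C : ℝ) : Set C(Icc (0:ℝ) T, Euc m) :=
  {y | (∀ u v : Icc (0:ℝ) T, ‖y u - y v‖ ≤ (normF F T M + C + 1) * |(u : ℝ) - (v : ℝ)|) ∧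
    y ⟨0, Set.left_mem_Icc.mpr hT⟩ ∈ M}

/-- `S_{[0,T]}`: restrictions to `[0,T]` of solutions starting in `M`. -/
def SolRestrict {m : ℕ} (F : Euc m → Set (Euc m)) (T : ℝ) (M : Set (Euc m)) :
    Set C(Icc (0:ℝ) T, Euc m) :=
  {y | ∃ z : ℝ → Euc m, IsSolution F z ∧ z 0 ∈ M ∧ ∀ u : Icc (0:ℝ) T, y u = z u}

/-- A generalised stochastic approximation process relative to `F`. -/
def IsGSAP {m : ℕ} {Ω : Type*} [MeasurableSpace Ω] (μ : Measure Ω)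
    (F : Euc m → Set (Euc m)) (M : Set (Euc m)) (γ : ℕ → ℝ)
    (Fn : ℕ → Euc m → Set (Euc m)) (U : ℕ → Ω → Euc m) (x : ℕ → Ω → Euc m) : Prop :=
  (∀ n, 0 < γ n) ∧
  Tendsto (fun n => ∑ i ∈ Finset.range n, γ (i + 1)) atTop atTop ∧
  Tendsto γ atTop (𝓝 0) ∧
  (∃ C, ∀ n ω, ‖U n ω‖ ≤ C) ∧
  (∀ n ω, x (n + 1) ω - x n ω - γ (n + 1) • U (n + 1) ω ∈ γ (n + 1) • Fn n (x n ω)) ∧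
  (∀ T > 0, ∀ᵐ ω ∂μ, Tendsto
    (fun n => ⨆ k : {k : ℕ // ∑ i ∈ Finset.Ico n k, γ i ≤ T},
      ‖∑ i ∈ Finset.Ico n (k : ℕ), γ (i + 1) • U (i + 1) ω‖) atTop (𝓝 0)) ∧
  (∀ n ω, x n ω ∈ M) ∧
  (∀ δ > 0, ∃ n₀ : ℕ, ∀ n ≥ n₀, ∀ ω, Fn n (x n ω) ⊆ Fdelta F δ (x n ω))

/-!
Limits of time translates of a bounded asymptotic pseudotrajectory `X` are solutions: nearby
solutions are uniformly Lipschitz on compact windows, and their difference quotients are averages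
of velocities, so convexity and upper hemicontinuity of `F` put the derivative of the limit in `F`.
Hence the compact set `L(X)` is invariant. A solution inside `L(X)` starting in the basin of `A`
accumulates on `A`, so `L(X)` meets `A` and `X` enters every neighborhood of `A` at arbitrarily
late times. Following a solution from there over windows `[T, 2T]` on which the attractor has
already pulled it back, `X` never leaves again.
-/

section General

theorem isBounded_biUnion_of_upperHemicontinuous {α β : Type*} [TopologicalSpace α]
    [PseudoMetricSpace β] {F : α → Set β} {K : Set α} (hF : UpperHemicontinuous F)
    (hbdd : ∀ x, Bornology.IsBounded (F x)) (hK : IsCompact K) :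
    Bornology.IsBounded (⋃ x ∈ K, F x) := by
  refine hK.induction_on (p := fun s => Bornology.IsBounded (⋃ x ∈ s, F x)) (by simp)
    (fun s t hst ht => ht.subset (biUnion_subset_biUnion_left hst))
    (fun s t hs ht => by simpa only [biUnion_union] using hs.union ht) fun x _ => ?_
  have hnear : ∀ᶠ q in 𝓝 x, F q ⊆ thickening 1 (F x) :=
    hF.forall_isOpen x _ isOpen_thickening (self_subset_thickening one_pos _)
  exact ⟨_, mem_nhdsWithin_of_mem_nhds hnear,
    (hbdd x).thickening.subset (iUnion₂_subset fun _ => id)⟩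

theorem intervalIntegrable_deriv_of_lipschitzWith {E : Type*} [NormedAddCommGroup E]
    [NormedSpace ℝ E] [CompleteSpace E] {z : ℝ → E} {C : NNReal} (hz : LipschitzWith C z)
    (a b : ℝ) : IntervalIntegrable (deriv z) volume a b := by
  refine (intervalIntegrable_const (c := (C : ℝ))).mono_fun
    (stronglyMeasurable_deriv z).aestronglyMeasurable (Eventually.of_forall fun t => ?_)
  simpa using norm_deriv_le_of_lipschitz hz

/- Mathlib has the fundamental theorem of calculus for absolutely continuous functions only with
real values, hence the detour through the dual. -/
theorem integral_deriv_eq_sub_of_lipschitzWith {E : Type*} [NormedAddCommGroup E]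
    [NormedSpace ℝ E] [FiniteDimensional ℝ E] {z : ℝ → E} {C : NNReal} (hz : LipschitzWith C z)
    (a b : ℝ) : ∫ u in a..b, deriv z u = z b - z a := by
  have : CompleteSpace E := FiniteDimensional.complete ℝ E
  refine (SeparatingDual.eq_iff_forall_dual_eq (R := ℝ)).2 fun φ => ?_
  have hφz : LipschitzWith _ (φ ∘ z) := φ.lipschitz.comp hz
  calc φ (∫ u in a..b, deriv z u)
      = ∫ u in a..b, φ (deriv z u) :=
        (φ.intervalIntegral_comp_comm (intervalIntegrable_deriv_of_lipschitzWith hz a b)).symm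
    _ = ∫ u in a..b, deriv (φ ∘ z) u := by
        refine intervalIntegral.integral_congr_ae ?_
        filter_upwards [hz.ae_differentiableAt_real] with u hu _
        exact (φ.hasFDerivAt.comp_hasDerivAt u hu.hasDerivAt).deriv.symm
    _ = φ (z b) - φ (z a) :=
        hφz.lipschitzOnWith.absolutelyContinuousOnInterval.integral_deriv_eq_sub
    _ = φ (z b - z a) := (map_sub φ _ _).symm

theorem neBot_curry {α β : Type*} {la : Filter α} {lb : Filter β} [NeBot la] [NeBot lb] :
    NeBot (la.curry lb) :=
  (frequently_true_iff_neBot _).1 <| (frequently_curry_iff _).2 <|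
    Frequently.of_forall fun _ => Frequently.of_forall fun _ => trivial

theorem lipschitzWith_of_tendsto {E ι : Type*} [PseudoMetricSpace E] {l : Filter ι} [NeBot l]
    {Y : ι → ℝ → E} {z : ℝ → E} {C : NNReal}
    (hLip : ∀ r, ∀ᶠ i in l, LipschitzOnWith C (Y i) (Icc (-r) r))
    (hlim : ∀ u, Tendsto (fun i => Y i u) l (𝓝 (z u))) : LipschitzWith C z := by
  refine LipschitzWith.of_dist_le_mul fun a b => ?_
  refine le_of_tendsto ((hlim a).dist (hlim b)) ?_
  filter_upwards [hLip (max |a| |b|)] with i hi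
  exact hi.dist_le_mul a (abs_le.1 (le_max_left _ _)) b (abs_le.1 (le_max_right _ _))

theorem exists_forall_tendsto_translate {E : Type*} [PseudoMetricSpace E] [ProperSpace E]
    {X : ℝ → E} (hX : Bornology.IsBounded (X '' Ici 0)) {l : Ultrafilter ℝ}
    (hl : (l : Filter ℝ) ≤ atTop) :
    ∃ z : ℝ → E, ∀ s, Tendsto (fun t => X (t + s)) l (𝓝 (z s)) := by
  have hlim (s : ℝ) : ∃ p, Tendsto (fun t => X (t + s)) l (𝓝 p) := by
    have hmem : ∀ᶠ t in (l : Filter ℝ), X (t + s) ∈ closure (X '' Ici 0) := by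
      filter_upwards [hl (eventually_ge_atTop (-s))] with t ht
      exact subset_closure (mem_image_of_mem X (neg_le_iff_add_nonneg.1 ht))
    obtain ⟨p, -, hp⟩ := hX.isCompact_closure.ultrafilter_le_nhds (l.map fun t => X (t + s))
      (le_principal_iff.2 hmem)
    exact ⟨p, hp⟩
  choose z hz using hlim
  exact ⟨z, hz⟩

theorem forall_ge_of_forall_Icc_add {p : ℝ → Prop} {t₀ T : ℝ} (hT : 0 < T) (h₀ : p t₀)
    (hstep : ∀ t ≥ t₀, p t → ∀ s ∈ Icc T (2 * T), p (t + s)) {t : ℝ} (ht : t₀ + T ≤ t) : p t := by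
  have hupTo : ∀ n : ℕ, ∀ t, t₀ + T ≤ t → t ≤ t₀ + 2 * T + n * T → p t := by
    intro n
    induction n with
    | zero =>
      intro t ht htn
      simpa using hstep t₀ le_rfl h₀ (t - t₀) ⟨by linarith, by simpa [add_comm] using htn⟩
    | succ n ih =>
      intro t ht htn
      rcases le_total t (t₀ + 2 * T) with hlt | hgt
      · exact ih t ht (hlt.trans (le_add_of_nonneg_right (by positivity)))
      · have hprev : p (t - T) := ih (t - T) (by linarith) (by push_cast at htn; linarith)
        simpa using hstep (t - T) (by linarith) hprev T ⟨le_rfl, by linarith⟩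
  obtain ⟨n, hn⟩ := exists_nat_ge ((t - (t₀ + 2 * T)) / T)
  rw [div_le_iff₀ hT] at hn
  exact hupTo n t ht (by linarith)

end General

section DifferentialInclusion

variable {m : ℕ} {F : Euc m → Set (Euc m)}

theorem IsStandardSVM.upperHemicontinuous (hF : IsStandardSVM F) : UpperHemicontinuous F := by
  obtain ⟨-, hgraph, c, hc, hgrowth⟩ := hF
  intro p
  refine UpperHemicontinuousAt.of_sequences
    (isCompact_closedBall (0 : Euc m) (c * (1 + (‖p‖ + 1)))).isSeqCompact ?_
    fun q hq v hv v₀ hv₀ => hgraph.mem_of_tendsto (hq.prodMk_nhds hv₀) (Eventually.of_forall hv)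
  filter_upwards [continuous_norm.continuousAt.eventually (gt_mem_nhds (lt_add_one ‖p‖))]
    with q hq v hv
  rw [mem_closedBall_zero_iff]
  exact (hgrowth q v hv).trans (by gcongr)

theorem IsSolution.exists_integral_eq_sub {y : ℝ → Euc m} (hy : IsSolution F y) :
    ∃ h : ℝ → Euc m, (∀ a b : ℝ, IntervalIntegrable h volume a b) ∧
      (∀ᵐ t ∂volume, h t ∈ F (y t)) ∧ ∀ a b : ℝ, ∫ u in a..b, h u = y b - y a := by
  obtain ⟨-, h, hint, hmem, heq⟩ := hy
  refine ⟨h, hint, hmem, fun a b => ?_⟩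
  rw [heq a, heq b, ← intervalIntegral.integral_interval_sub_left (hint 0 b) (hint 0 a)]
  abel

theorem IsSolution.comp_add_right {y : ℝ → Euc m} (hy : IsSolution F y) (r : ℝ) :
    IsSolution F (fun u => y (u + r)) := by
  obtain ⟨h, hint, hmem, heq⟩ := hy.exists_integral_eq_sub
  refine ⟨hy.1.comp (continuous_add_const r), fun u => h (u + r), fun a b => ?_,
    (measurePreserving_add_right volume r).quasiMeasurePreserving.ae hmem, fun t => ?_⟩
  · simpa using (hint (a + r) (b + r)).comp_add_right r
  · rw [intervalIntegral.integral_comp_add_right, heq]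
    abel

theorem IsSolution.dist_le {y : ℝ → Euc m} (hy : IsSolution F y) {a b C : ℝ}
    (hC : ∀ u ∈ uIoc a b, F (y u) ⊆ closedBall 0 C) : dist (y a) (y b) ≤ C * dist a b := by
  obtain ⟨h, -, hmem, heq⟩ := hy.exists_integral_eq_sub
  rw [dist_comm, dist_comm a, dist_eq_norm, ← heq, Real.dist_eq]
  refine intervalIntegral.norm_integral_le_of_norm_le_const_ae ?_
  filter_upwards [hmem] with u hu hI using mem_closedBall_zero_iff.1 (hC u hI hu)

theorem IsSolution.slope_mem {y : ℝ → Euc m} (hy : IsSolution F y) {S : Set (Euc m)}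
    (hS : Convex ℝ S) (hScl : IsClosed S) {a b : ℝ} (hab : a < b)
    (hyS : ∀ u ∈ Ioc a b, F (y u) ⊆ S) : slope y a b ∈ S := by
  obtain ⟨h, hint, hmem, heq⟩ := hy.exists_integral_eq_sub
  have haverage : ⨍ u in a..b, h u ∈ S := by
    rw [uIoc_of_le hab.le]
    refine hS.set_average_mem hScl (by simp [hab]) (by simp) ?_ (hint a b).1
    filter_upwards [ae_restrict_of_ae hmem, ae_restrict_mem measurableSet_Ioc] with u hu hI
    exact hyS u hI hu
  rwa [interval_average_eq, heq] at haverage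

theorem isSolution_of_lipschitzWith {z : ℝ → Euc m} {C : NNReal} (hz : LipschitzWith C z)
    (hmem : ∀ t, DifferentiableAt ℝ z t → deriv z t ∈ F (z t)) : IsSolution F z := by
  refine ⟨hz.continuous, deriv z, intervalIntegrable_deriv_of_lipschitzWith hz,
    hz.ae_differentiableAt_real.mono hmem, fun t => ?_⟩
  rw [integral_deriv_eq_sub_of_lipschitzWith hz, add_sub_cancel]

end DifferentialInclusion

section LimitsOfSolutions

variable {m : ℕ} {F : Euc m → Set (Euc m)} {ι : Type*} {l : Filter ι} {Y : ι → ℝ → Euc m}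
  {z : ℝ → Euc m}

theorem exists_eventually_lipschitzOnWith {K : Set (Euc m)} (hF : UpperHemicontinuous F)
    (hFbdd : ∀ x, Bornology.IsBounded (F x)) (hY : ∀ᶠ i in l, IsSolution F (Y i))
    (hK : Bornology.IsBounded K) (hYK : ∀ r, ∀ᶠ i in l, MapsTo (Y i) (Icc (-r) r) K) :
    ∃ C : NNReal, ∀ r, ∀ᶠ i in l, LipschitzOnWith C (Y i) (Icc (-r) r) := by
  obtain ⟨C, hC⟩ := (isBounded_biUnion_of_upperHemicontinuous hF hFbdd
    hK.isCompact_closure).subset_closedBall 0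
  refine ⟨C.toNNReal, fun r => ?_⟩
  filter_upwards [hY, hYK r] with i hsol hmaps
  refine LipschitzOnWith.of_dist_le_mul fun a ha b hb => hsol.dist_le fun u hu v hv => ?_
  have huK : Y i u ∈ closure K :=
    subset_closure (hmaps (ordConnected_Icc.uIcc_subset ha hb (uIoc_subset_uIcc hu)))
  exact closedBall_subset_closedBall C.le_coe_toNNReal (hC (mem_biUnion huK hv))

theorem deriv_mem_of_tendsto [NeBot l] {C : NNReal} {t b : ℝ}
    (hF : UpperHemicontinuousAt F (z t)) (hFcl : IsClosed (F (z t)))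
    (hFconv : Convex ℝ (F (z t))) (hY : ∀ᶠ i in l, IsSolution F (Y i)) (htb : t < b)
    (hLip : ∀ᶠ i in l, LipschitzOnWith C (Y i) (Icc t b))
    (hlim : ∀ u, Tendsto (fun i => Y i u) l (𝓝 (z u))) (hz : DifferentiableAt ℝ z t) :
    deriv z t ∈ F (z t) := by
  rw [← hFcl.closure_eq, closure_eq_iInter_cthickening]
  refine mem_iInter₂.2 fun ε hε => ?_
  obtain ⟨δ, hδ, hFδ⟩ := Metric.eventually_nhds_iff.1 (hF.forall_isOpen _ isOpen_thickening
    (self_subset_thickening hε _))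
  have hzslope : Tendsto (slope z t) (𝓝[>] t) (𝓝 (deriv z t)) :=
    hz.hasDerivAt.tendsto_slope.mono_left (nhdsGT_le_nhdsNE t)
  have hshort : ∀ᶠ s in 𝓝[>] t, C * (s - t) < δ / 2 :=
    nhdsWithin_le_nhds <| ContinuousAt.eventually_lt (by fun_prop) continuousAt_const (by simpa)
  refine isClosed_cthickening.mem_of_tendsto hzslope ?_
  filter_upwards [hshort, Ioo_mem_nhdsGT htb] with s hsδ hs
  have hYslope : Tendsto (fun i => slope (Y i) t s) l (𝓝 (slope z t s)) :=
    ((hlim s).sub (hlim t)).const_smul _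
  refine isClosed_cthickening.mem_of_tendsto hYslope ?_
  filter_upwards [hY, hLip, (hlim t).eventually (ball_mem_nhds _ (half_pos hδ))]
    with i hsol hlip hnear
  refine hsol.slope_mem (hFconv.cthickening ε) isClosed_cthickening hs.1 fun u hu => ?_
  have hclose : dist (Y i u) (z t) < δ := calc
    dist (Y i u) (z t) ≤ dist (Y i u) (Y i t) + dist (Y i t) (z t) := dist_triangle _ _ _
    _ ≤ C * dist u t + dist (Y i t) (z t) := by
      gcongr
      exact hlip.dist_le_mul u ⟨hu.1.le, hu.2.trans hs.2.le⟩ t ⟨le_rfl, htb.le⟩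
    _ ≤ C * (s - t) + dist (Y i t) (z t) := by
      rw [Real.dist_eq, abs_of_pos (sub_pos.2 hu.1)]
      gcongr
      exact hu.2
    _ < δ := by linarith [mem_ball.1 hnear]
  exact (hFδ hclose).trans (thickening_subset_cthickening _ _)

theorem isSolution_of_tendsto [NeBot l] {K : Set (Euc m)} (hF : UpperHemicontinuous F)
    (hFcpt : ∀ x, IsCompact (F x)) (hFconv : ∀ x, Convex ℝ (F x))
    (hY : ∀ᶠ i in l, IsSolution F (Y i)) (hK : Bornology.IsBounded K)
    (hYK : ∀ r, ∀ᶠ i in l, MapsTo (Y i) (Icc (-r) r) K)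
    (hlim : ∀ u, Tendsto (fun i => Y i u) l (𝓝 (z u))) : IsSolution F z := by
  obtain ⟨C, hLip⟩ :=
    exists_eventually_lipschitzOnWith hF (fun x => (hFcpt x).isBounded) hY hK hYK
  refine isSolution_of_lipschitzWith (lipschitzWith_of_tendsto hLip hlim) fun t ht => ?_
  refine deriv_mem_of_tendsto (C := C) (hF (z t)) (hFcpt _).isClosed (hFconv _) hY (lt_add_one t)
    ?_ hlim ht
  filter_upwards [hLip (|t| + 1)] with i hi
  exact hi.mono (Icc_subset_Icc (by linarith [neg_abs_le t]) (by linarith [le_abs_self t]))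

end LimitsOfSolutions

section LimitSet

variable {m : ℕ} {F : Euc m → Set (Euc m)} {X z : ℝ → Euc m}

theorem mem_limitSet_iff_mapClusterPt {x : Euc m} : x ∈ limitSet X ↔ MapClusterPt x atTop X := by
  simp only [limitSet, mem_iInter, mem_closure_iff_nhds, mapClusterPt_iff_frequently,
    frequently_atTop]
  constructor
  · intro h s hs a
    obtain ⟨_, hy, b, hb, rfl⟩ := h (max a 0) (mem_Ici.2 (le_max_right _ _)) s hs
    exact ⟨b, (le_max_left _ _).trans hb, hy⟩
  · intro h t _ s hs
    obtain ⟨b, hb, hy⟩ := h s hs t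
    exact ⟨X b, hy, b, hb, rfl⟩

theorem isClosed_limitSet : IsClosed (limitSet X) :=
  isClosed_biInter fun _ _ => isClosed_closure

theorem limitSet_subset_of_eventually_mem {S : Set (Euc m)} (hS : IsClosed S)
    (hX : ∀ᶠ t in atTop, X t ∈ S) : limitSet X ⊆ S := fun _ hx =>
  hS.closure_eq ▸ ((mem_limitSet_iff_mapClusterPt.1 hx).mem_closure_of_mem _ hX)

theorem isCompact_limitSet (hX : Bornology.IsBounded (X '' Ici 0)) : IsCompact (limitSet X) := by
  refine hX.isCompact_closure.of_isClosed_subset isClosed_limitSet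
    (limitSet_subset_of_eventually_mem isClosed_closure ?_)
  filter_upwards [eventually_ge_atTop 0] with t ht using subset_closure (mem_image_of_mem X ht)

theorem limitSet_nonempty {K : Set (Euc m)} (hK : IsCompact K) (hX : ∀ t, X t ∈ K) :
    (limitSet X).Nonempty := by
  obtain ⟨p, -, hp⟩ := hK.exists_mapClusterPt (f := atTop) (u := X)
    (le_principal_iff.2 (eventually_map.2 (Eventually.of_forall hX)))
  exact ⟨p, mem_limitSet_iff_mapClusterPt.2 hp⟩

theorem mem_limitSet_of_tendsto {l : Filter ℝ} [NeBot l] (hl : l ≤ atTop) {s : ℝ} {x : Euc m}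
    (hx : Tendsto (fun t => X (t + s)) l (𝓝 x)) : x ∈ limitSet X :=
  mem_limitSet_iff_mapClusterPt.2 <| MapClusterPt.of_comp
    ((tendsto_atTop_add_const_right _ s tendsto_id).mono_left hl) hx.mapClusterPt

theorem IsSolution.limitSet_subset_omegaLimitSV (hz : IsSolution F z) :
    limitSet z ⊆ omegaLimitSV F (z 0) :=
  iInter₂_mono fun _ _ => closure_mono fun _ ⟨s, hs, hy⟩ => ⟨s, hs, z, hz, rfl, hy⟩

end LimitSet

section Pseudotrajectory

variable {m : ℕ} {F : Euc m → Set (Euc m)} {X z : ℝ → Euc m} {A : Set (Euc m)}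

theorem exists_isSolution_dist_lt (hX : Continuous X) (hsol : ∃ y, IsSolution F y) {T ε : ℝ}
    (hε : distToSol F X T < ε) :
    ∃ y, IsSolution F y ∧ ∀ u ∈ Icc 0 T, dist (y u) (X u) < ε := by
  have hne : {d | ∃ y, IsSolution F y ∧ d = ⨆ u : Icc 0 T, ‖y u - X u‖}.Nonempty := by
    obtain ⟨y, hy⟩ := hsol
    exact ⟨_, y, hy, rfl⟩
  obtain ⟨_, ⟨y, hy, rfl⟩, hlt⟩ := exists_lt_of_csInf_lt hne hε
  refine ⟨y, hy, fun u hu => lt_of_le_of_lt ?_ hlt⟩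
  have hcont : Continuous fun u : Icc 0 T => ‖y u - X u‖ := by
    have := hy.1
    fun_prop
  rw [dist_eq_norm]
  exact le_ciSup (isCompact_range hcont).bddAbove ⟨u, hu⟩

theorem IsAPT.exists_isSolution_eventually_dist_lt (hAPT : IsAPT F X) (hX : Continuous X)
    (hsol : ∃ y, IsSolution F y) (T : ℝ) :
    ∃ Y : ℝ → ℝ → Euc m, (∀ t, IsSolution F (Y t)) ∧
      ∀ ε > 0, ∀ᶠ t in atTop, ∀ u ∈ Icc 0 T, dist (Y t u) (X (t + u)) < ε := by
  have hnear (t : ℝ) := exists_isSolution_dist_lt (hX.comp (continuous_const_add t)) hsol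
    (lt_add_of_pos_right (distToSol F (fun u => X (t + u)) (max T 1)) (Real.exp_pos (-t)))
  choose Y hY hdist using hnear
  have hzero : Tendsto (fun t => distToSol F (fun u => X (t + u)) (max T 1) + Real.exp (-t))
      atTop (𝓝 0) := by
    simpa using (hAPT _ (lt_max_of_lt_right one_pos)).add Real.tendsto_exp_neg_atTop_nhds_zero
  refine ⟨Y, hY, fun ε hε => ?_⟩
  filter_upwards [hzero.eventually (gt_mem_nhds hε)] with t ht u hu
  exact (hdist t u ⟨hu.1, hu.2.trans (le_max_left _ _)⟩).trans ht

theorem IsAPT.exists_isSolution_eventually_dist_lt_symm (hAPT : IsAPT F X) (hX : Continuous X)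
    (hsol : ∃ y, IsSolution F y) (R : ℝ) :
    ∃ Y : ℝ → ℝ → Euc m, (∀ t, IsSolution F (Y t)) ∧
      ∀ ε > 0, ∀ᶠ t in atTop, ∀ u ∈ Icc (-R) R, dist (Y t u) (X (t + u)) < ε := by
  obtain ⟨Y, hY, hdist⟩ := hAPT.exists_isSolution_eventually_dist_lt hX hsol (2 * R)
  refine ⟨fun t u => Y (t - R) (u + R), fun t => (hY _).comp_add_right R, fun ε hε => ?_⟩
  have hlate : Tendsto (fun t : ℝ => t - R) atTop atTop :=
    tendsto_atTop_add_const_right _ _ tendsto_id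
  filter_upwards [hlate.eventually (hdist ε hε)] with t ht u hu
  have hshift : t - R + (u + R) = t + u := by ring
  simpa only [hshift] using ht (u + R) ⟨by linarith [hu.1], by linarith [hu.2]⟩

theorem IsAPT.isSolution_of_tendsto_translate (hAPT : IsAPT F X) (hF : UpperHemicontinuous F)
    (hFcpt : ∀ x, IsCompact (F x)) (hFconv : ∀ x, Convex ℝ (F x)) (hX : Continuous X)
    (hXbdd : Bornology.IsBounded (X '' Ici 0)) (hsol : ∃ y, IsSolution F y) {l : Filter ℝ}
    [NeBot l] (hl : l ≤ atTop) (hz : ∀ s, Tendsto (fun t => X (t + s)) l (𝓝 (z s))) :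
    IsSolution F z := by
  choose Y hY hdist using hAPT.exists_isSolution_eventually_dist_lt_symm hX hsol
  -- `Y R t` is close to `X` only for `t` late depending on `R`, hence the iterated limit.
  have hneBot : NeBot ((atTop : Filter ℝ).curry l) := neBot_curry
  have hbdd (r : ℝ) : ∀ᶠ p in atTop.curry l,
      MapsTo (Y p.1 p.2) (Icc (-r) r) (thickening 1 (X '' Ici 0)) := by
    rw [eventually_curry_iff]
    filter_upwards [eventually_ge_atTop r] with R hR
    filter_upwards [hl (hdist R 1 one_pos), hl (eventually_ge_atTop r)] with t ht htr u hu
    have hwindow : u ∈ Icc (-R) R := Icc_subset_Icc (neg_le_neg hR) hR hu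
    have hpos : 0 ≤ t + u := by linarith [hu.1]
    exact mem_thickening_iff.2 ⟨_, mem_image_of_mem X hpos, ht u hwindow⟩
  have hlim (u : ℝ) : Tendsto (fun p : ℝ × ℝ => Y p.1 p.2 u) (atTop.curry l) (𝓝 (z u)) := by
    refine Tendsto.curry (f := fun R t => Y R t u) ?_
    filter_upwards [eventually_ge_atTop |u|] with R hR
    refine (tendsto_iff_of_dist (Metric.tendsto_nhds.2 fun ε hε => ?_)).2 (hz u)
    filter_upwards [hl (hdist R ε hε)] with t ht
    simpa using ht u (abs_le.1 hR)
  have hYsol : ∀ᶠ p in (atTop : Filter ℝ).curry l, IsSolution F (Y p.1 p.2) :=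
    Eventually.of_forall fun p => hY p.1 p.2
  exact isSolution_of_tendsto hF hFcpt hFconv hYsol hXbdd.thickening hbdd hlim

theorem IsAPT.exists_isSolution_mem_limitSet (hAPT : IsAPT F X) (hF : UpperHemicontinuous F)
    (hFcpt : ∀ x, IsCompact (F x)) (hFconv : ∀ x, Convex ℝ (F x)) (hX : Continuous X)
    (hXbdd : Bornology.IsBounded (X '' Ici 0)) (hsol : ∃ y, IsSolution F y) {x : Euc m}
    (hx : x ∈ limitSet X) : ∃ z, IsSolution F z ∧ z 0 = x ∧ ∀ s, z s ∈ limitSet X := by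
  obtain ⟨l, hl, hlx⟩ := mapClusterPt_iff_ultrafilter.1 (mem_limitSet_iff_mapClusterPt.1 hx)
  obtain ⟨z, hz⟩ := exists_forall_tendsto_translate hXbdd hl
  exact ⟨z, hAPT.isSolution_of_tendsto_translate hF hFcpt hFconv hX hXbdd hsol hl hz,
    tendsto_nhds_unique (hz 0) (by simpa using hlx), fun s => mem_limitSet_of_tendsto hl (hz s)⟩

theorem IsAPT.limitSet_inter_nonempty (hAPT : IsAPT F X) (hF : UpperHemicontinuous F)
    (hFcpt : ∀ x, IsCompact (F x)) (hFconv : ∀ x, Convex ℝ (F x)) (hX : Continuous X)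
    (hXbdd : Bornology.IsBounded (X '' Ici 0)) (hsol : ∃ y, IsSolution F y)
    (hmeet : (limitSet X ∩ basinSV F A).Nonempty) : (limitSet X ∩ A).Nonempty := by
  obtain ⟨x, hxL, hxB⟩ := hmeet
  obtain ⟨z, hz, rfl, hzL⟩ :=
    hAPT.exists_isSolution_mem_limitSet hF hFcpt hFconv hX hXbdd hsol hxL
  obtain ⟨p, hp⟩ := limitSet_nonempty (isCompact_limitSet hXbdd) hzL
  exact ⟨p, limitSet_subset_of_eventually_mem isClosed_limitSet (Eventually.of_forall hzL) hp,
    hxB (hz.limitSet_subset_omegaLimitSV hp)⟩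

end Pseudotrajectory

section Attraction

variable {m : ℕ} {F : Euc m → Set (Euc m)} {X : ℝ → Euc m} {A : Set (Euc m)}

/-- `A` uniformly attracts an open neighborhood of itself. This is the attraction clause of
`IsAttractorSV`, separated from the invariance and compactness of `A`. -/
def AttractsNeighborhood (F : Euc m → Set (Euc m)) (A : Set (Euc m)) : Prop :=
  ∃ U : Set (Euc m), IsOpen U ∧ A ⊆ U ∧
    ∀ ε > 0, ∃ tε > 0, ∀ t ≥ tε, ∀ x ∈ U, PhiT F t x ⊆ thickening ε A

theorem AttractsNeighborhood.exists_thickening (hattr : AttractsNeighborhood F A)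
    (hA : IsCompact A) : ∃ δ > 0, ∀ ε > 0, ∃ T > 0, ∀ y, IsSolution F y →
      y 0 ∈ thickening δ A → ∀ t ≥ T, y t ∈ thickening ε A := by
  obtain ⟨U, hUopen, hAU, hU⟩ := hattr
  obtain ⟨δ, hδ, hδU⟩ := hA.exists_thickening_subset_open hUopen hAU
  refine ⟨δ, hδ, fun ε hε => ?_⟩
  obtain ⟨T, hT, hTU⟩ := hU ε hε
  exact ⟨T, hT, fun y hy hy₀ t ht => hTU t ht _ (hδU hy₀) ⟨y, hy, rfl, rfl⟩⟩

theorem IsAPT.exists_eventually_forall_Icc_mem_thickening (hAPT : IsAPT F X) (hX : Continuous X)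
    (hsol : ∃ y, IsSolution F y) (hA : IsCompact A) (hattr : AttractsNeighborhood F A) :
    ∃ δ > 0, ∀ ε > 0, ε ≤ δ → ∃ T > 0, ∀ᶠ t in atTop, X t ∈ thickening ε A →
      ∀ s ∈ Icc T (2 * T), X (t + s) ∈ thickening ε A := by
  obtain ⟨δ, hδ, hpull⟩ := hattr.exists_thickening hA
  refine ⟨δ / 2, half_pos hδ, fun ε hε hεδ => ?_⟩
  obtain ⟨T, hT, hTε⟩ := hpull (ε / 2) (half_pos hε)
  obtain ⟨Y, hY, hdist⟩ := hAPT.exists_isSolution_eventually_dist_lt hX hsol (2 * T)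
  refine ⟨T, hT, ?_⟩
  filter_upwards [hdist (ε / 2) (half_pos hε)] with t ht hXt s hs
  have hstart : Y t 0 ∈ thickening δ A := by
    have hdist₀ : dist (Y t 0) (X t) < ε / 2 := by simpa using ht 0 ⟨le_rfl, by positivity⟩
    exact thickening_mono (by linarith) A
      (thickening_thickening_subset _ _ A (mem_thickening_iff.2 ⟨X t, hXt, hdist₀⟩))
  have hend : Y t s ∈ thickening (ε / 2) A := hTε _ (hY t) hstart s hs.1
  have hdistₛ : dist (X (t + s)) (Y t s) < ε / 2 :=
    dist_comm (Y t s) _ ▸ ht s ⟨hT.le.trans hs.1, hs.2⟩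
  simpa only [add_halves] using
    thickening_thickening_subset _ _ A (mem_thickening_iff.2 ⟨_, hend, hdistₛ⟩)

theorem IsAPT.eventually_mem_thickening (hAPT : IsAPT F X) (hX : Continuous X)
    (hsol : ∃ y, IsSolution F y) (hA : IsCompact A) (hattr : AttractsNeighborhood F A)
    (hmeet : (limitSet X ∩ A).Nonempty) {ε : ℝ} (hε : 0 < ε) :
    ∀ᶠ t in atTop, X t ∈ thickening ε A := by
  obtain ⟨δ, hδ, htrap⟩ := hAPT.exists_eventually_forall_Icc_mem_thickening hX hsol hA hattr
  have hρ : 0 < min ε δ := lt_min hε hδ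
  obtain ⟨T, hT, hstep⟩ := htrap _ hρ (min_le_right _ _)
  obtain ⟨p, hpL, hpA⟩ := hmeet
  have hvisit : ∃ᶠ t in atTop, X t ∈ thickening (min ε δ) A :=
    (mem_limitSet_iff_mapClusterPt.1 hpL).frequently
      (isOpen_thickening.mem_nhds (self_subset_thickening hρ A hpA))
  obtain ⟨t₀, ht₀, hstep₀⟩ := (hvisit.and_eventually (eventually_forall_ge_atTop.2 hstep)).exists
  filter_upwards [eventually_ge_atTop (t₀ + T)] with t ht
  exact thickening_mono (min_le_left _ _) A (forall_ge_of_forall_Icc_add hT ht₀ hstep₀ ht)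

end Attraction

theorem limitSet_subset_attractor_of_APT_general
    {m : ℕ} {F : Euc m → Set (Euc m)} (hF : UpperHemicontinuous F)
    (hFcpt : ∀ x, IsCompact (F x)) (hFconv : ∀ x, Convex ℝ (F x))
    (hsol : ∃ y, IsSolution F y) {X : ℝ → Euc m} (hX : Continuous X)
    (hXbdd : Bornology.IsBounded (X '' Ici 0)) (hAPT : IsAPT F X)
    {A : Set (Euc m)} (hA : IsCompact A) (hattr : AttractsNeighborhood F A)
    (hmeet : (limitSet X ∩ basinSV F A).Nonempty) :
    limitSet X ⊆ A := by
  have hmeetA : (limitSet X ∩ A).Nonempty :=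
    hAPT.limitSet_inter_nonempty hF hFcpt hFconv hX hXbdd hsol hmeet
  rw [← hA.isClosed.closure_eq, closure_eq_iInter_cthickening]
  refine subset_iInter₂ fun ε hε => limitSet_subset_of_eventually_mem isClosed_cthickening ?_
  filter_upwards [hAPT.eventually_mem_thickening hX hsol hA hattr hmeetA hε] with t ht
  exact thickening_subset_cthickening ε A ht

/-- If `X` is a bounded asymptotic pseudotrajectory of the set-valued
dynamical system induced by a standard `F` and `A` is an attractor whose basin meets
the limit set `L(X)`, then `L(X) ⊆ A`. -/
theorem limitSet_subset_attractor_of_APT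
    {m : ℕ} (F : Euc m → Set (Euc m)) (hF : IsStandardSVM F)
    (X : ℝ → Euc m) (hXcont : Continuous X)
    (hXbdd : Bornology.IsBounded (X '' Ici (0:ℝ)))
    (hAPT : IsAPT F X)
    (A : Set (Euc m)) (hA : IsAttractorSV F A)
    (hmeet : (limitSet X ∩ basinSV F A).Nonempty) :
    limitSet X ⊆ A := by
  obtain ⟨⟨p, hp⟩, hAcpt, hinv, hattr⟩ := hA
  exact limitSet_subset_attractor_of_APT_general hF.upperHemicontinuous (fun x => (hF.1 x).2.1)
    (fun x => (hF.1 x).2.2) ((hinv p hp).imp fun _ => And.left) hXcont hXbdd hAPT hAcpt hattr hmeet
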